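/- In Sim, the second player cannot force a win before the fifteenth move: the first player, Red, has a strategy such that in every play in which he follows it, either the second player is at some point unable to make a legal move (so Red wins), or the play reaches a position in which fourteen edges are colored, so that Red loses only by being unable to make the fifteenth and final move. -/

import Mathlib

/-- The 15 edges of the complete graph `K_6`: unordered pairs of distinct vertices. -/
abbrev Edge6 := {e : Sym2 (Fin 6) // ¬ e.IsDiag}

/-- The edge of `K_6` joining two distinct vertices. -/
def mkEdge6 (a b : Fin 6) (h : a ≠ b) : Edge6 :=
  ⟨s(a, b), by simpa using h⟩

/-- A Sim position: a partial coloring of the edges of `K_6`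
(`none` = uncolored, `some true` = Red, `some false` = Green). -/
abbrev Pos := Edge6 → Option Bool

/-- The initial position: all edges uncolored. -/
def startPos : Pos := fun _ => none

/-- Coloring edge `e` in color `c`. -/
def colorEdge (p : Pos) (c : Bool) (e : Edge6) : Pos :=
  Function.update p e (some c)

/-- Position `p` contains a triangle all three of whose edges have color `c`. -/
def HasMonoTri (p : Pos) (c : Bool) : Prop :=
  ∃ a b d : Fin 6, ∃ hab : a ≠ b, ∃ had : a ≠ d, ∃ hbd : b ≠ d,
    p (mkEdge6 a b hab) = some c ∧ p (mkEdge6 a d had) = some c ∧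
      p (mkEdge6 b d hbd) = some c

/-- A legal Sim move for player `c` at position `p`: color a so-far uncolored edge, but
it is forbidden to create a monochromatic triangle in one's own color. -/
def Legal (p : Pos) (c : Bool) (e : Edge6) : Prop :=
  p e = none ∧ ¬ HasMonoTri (colorEdge p c e) c

/-- The player making the `k`-th move (moves are numbered from 0):
Red (`true`) moves first and the players alternate. -/
def playerAt (k : ℕ) : Bool := decide (k % 2 = 0)

/-- The position reached from `p` after the list of moves `ms`, the first element of
`ms` being made by the player moving at step `k`. -/
def posFrom (p : Pos) (k : ℕ) : List Edge6 → Pos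
  | [] => p
  | e :: ms => posFrom (colorEdge p (playerAt k) e) (k + 1) ms

/-- The position reached from the empty board after the list of moves `ms`. -/
def posAfter (ms : List Edge6) : Pos := posFrom startPos 0 ms

/-- A play (list of moves, alternately by Red and Green, Red first) in which Red follows
the strategy `σ`: every move is legal for the player making it, and every move of Red is
the one prescribed by `σ` at the current position. -/
def FollowsRed (σ : Pos → Edge6) (ms : List Edge6) : Prop :=
  ∀ i, ∀ h : i < ms.length,
    Legal (posAfter (ms.take i)) (playerAt i) (ms.get ⟨i, h⟩) ∧
    (playerAt i = true → ms.get ⟨i, h⟩ = σ (posAfter (ms.take i)))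

/-!
Red opens with the edge `01`. Up to a permutation of the vertices Green has only two answers, an
edge adjacent to `01` and an edge disjoint from it, and after either of them an exhaustive search
shows that Red can always find a legal move at each of his next six turns, which brings the play to
fourteen colored edges. The search is made feasible inside the kernel by coding the red and the
green graph as adjacency bitmasks: as neither color contains a triangle, an uncolored edge `ab` may
be colored just if `a` and `b` have no common neighbor in the mover's graph.
-/

section Survival

/-- `RedSurvives n p`: in position `p` with Red to move, Red can play so that he has a legal move
at each of his next `n` turns, unless Green gets stuck before that. -/
def RedSurvives : ℕ → Pos → Prop
  | 0, _ => True
  | n + 1, p => ∃ e, Legal p true e ∧ ∀ f, Legal (colorEdge p true e) false f →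
      RedSurvives n (colorEdge (colorEdge p true e) false f)

/-- The set of uncolored edges of a position. -/
def uncolored (p : Pos) : Finset Edge6 := {e | p e = none}

/-- Position `p`, with Red to move, is safe for Red: he survives until at most one uncolored edge
is left. Two edges are colored per round, whence the number of rounds. -/
def RedSafe (p : Pos) : Prop := RedSurvives ((uncolored p).card / 2) p

/-- Position `p`, with Green to move, is safe for Red: each legal move of Green leads to a position
that is safe for Red. -/
def RedSafeGreenToMove (p : Pos) : Prop := ∀ f, Legal p false f → RedSafe (colorEdge p false f)

/-- A legal move of Red that keeps the position safe for him. -/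
def IsSafeMove (p : Pos) (e : Edge6) : Prop :=
  Legal p true e ∧ RedSafeGreenToMove (colorEdge p true e)

/-- The strategy of Red that makes a safe move whenever there is one. -/
noncomputable def safeStrategy (p : Pos) : Edge6 :=
  @Classical.epsilon _ ⟨mkEdge6 0 1 (by decide)⟩ (IsSafeMove p)

variable {p : Pos} {c : Bool} {e f : Edge6}

lemma card_uncolored_startPos : (uncolored startPos).card = 15 := by
  have huniv : uncolored startPos = Finset.univ := Finset.filter_true_of_mem fun _ _ => rfl
  rw [huniv, Finset.card_univ, Sym2.card_subtype_not_diag]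
  rfl

lemma uncolored_colorEdge : uncolored (colorEdge p c e) = (uncolored p).erase e := by
  ext f
  rw [uncolored, uncolored, Finset.mem_erase, Finset.mem_filter_univ, Finset.mem_filter_univ,
    colorEdge, Function.update_apply]
  split_ifs with hfe <;> simp [hfe]

lemma Legal.card_uncolored_colorEdge (he : Legal p c e) :
    (uncolored (colorEdge p c e)).card + 1 = (uncolored p).card := by
  rw [uncolored_colorEdge]
  exact Finset.card_erase_add_one (by simpa [uncolored] using he.1)

lemma RedSafe.card_uncolored_le_one (hp : RedSafe p) (hstuck : ∀ e, ¬ Legal p true e) :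
    (uncolored p).card ≤ 1 := by
  by_contra! hcard
  obtain ⟨n, hn⟩ : ∃ n, (uncolored p).card / 2 = n + 1 := Nat.exists_eq_add_one.2 (by omega)
  rw [RedSafe, hn] at hp
  obtain ⟨e, he, -⟩ := hp
  exact hstuck e he

lemma RedSafe.exists_isSafeMove (hp : RedSafe p) (hlegal : ∃ e, Legal p true e) :
    ∃ e, IsSafeMove p e := by
  rcases hcard : (uncolored p).card / 2 with _ | n
  · obtain ⟨e, he⟩ := hlegal
    refine ⟨e, he, fun f hf => ?_⟩
    have hcard_e := he.card_uncolored_colorEdge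
    have hcard_f := hf.card_uncolored_colorEdge
    omega
  · rw [RedSafe, hcard] at hp
    obtain ⟨e, he, hreply⟩ := hp
    refine ⟨e, he, fun f hf => ?_⟩
    have hcard_e := he.card_uncolored_colorEdge
    have hcard_f := hf.card_uncolored_colorEdge
    have hround : (uncolored (colorEdge (colorEdge p true e) false f)).card / 2 = n := by omega
    rw [RedSafe, hround]
    exact hreply f hf

lemma RedSafe.isSafeMove_safeStrategy (hp : RedSafe p) (hlegal : ∃ e, Legal p true e) :
    IsSafeMove p (safeStrategy p) :=
  Classical.epsilon_spec (hp.exists_isSafeMove hlegal)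

end Survival

section Plays

variable {σ : Pos → Edge6} {ms : List Edge6} {e : Edge6}

lemma playerAt_succ (k : ℕ) : playerAt (k + 1) = !playerAt k := by
  rw [playerAt, playerAt, ← decide_not, decide_eq_decide]
  omega

lemma posFrom_concat (p : Pos) (k : ℕ) (ms : List Edge6) (e : Edge6) :
    posFrom p k (ms ++ [e]) = colorEdge (posFrom p k ms) (playerAt (k + ms.length)) e := by
  induction ms generalizing p k with
  | nil => rfl
  | cons f ms ih =>
    rw [List.cons_append, posFrom, ih, posFrom, List.length_cons, Nat.add_right_comm, Nat.add_assoc]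

lemma posAfter_concat (ms : List Edge6) (e : Edge6) :
    posAfter (ms ++ [e]) = colorEdge (posAfter ms) (playerAt ms.length) e := by
  rw [posAfter, posFrom_concat, Nat.zero_add, posAfter]

lemma FollowsRed.of_concat (h : FollowsRed σ (ms ++ [e])) : FollowsRed σ ms := by
  intro i hi
  simpa [List.take_append_of_le_length hi.le, List.getElem_append_left hi] using
    h i (by rw [List.length_append]; omega)

lemma FollowsRed.last_move (h : FollowsRed σ (ms ++ [e])) :
    Legal (posAfter ms) (playerAt ms.length) e ∧
      (playerAt ms.length = true → e = σ (posAfter ms)) := by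
  simpa using h ms.length (by simp)

lemma FollowsRed.card_uncolored_add_length (h : FollowsRed σ ms) :
    (uncolored (posAfter ms)).card + ms.length = 15 := by
  induction ms using List.reverseRecOn with
  | nil => exact card_uncolored_startPos
  | append_singleton ms e ih =>
    have hcard := h.last_move.1.card_uncolored_colorEdge
    rw [posAfter_concat, List.length_append, List.length_singleton]
    linarith [ih h.of_concat]

lemma FollowsRed.safe_posAfter (hstart : RedSafe startPos) (h : FollowsRed safeStrategy ms) :
    if playerAt ms.length = true then RedSafe (posAfter ms)
    else RedSafeGreenToMove (posAfter ms) := by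
  induction ms using List.reverseRecOn with
  | nil => exact hstart
  | append_singleton ms e ih =>
    obtain ⟨he, hσ⟩ := h.last_move
    have hsafe := ih h.of_concat
    rw [posAfter_concat, List.length_append, List.length_singleton, playerAt_succ]
    cases hturn : playerAt ms.length with
    | true =>
      rw [hturn] at he hsafe
      rw [hσ hturn]
      exact (RedSafe.isSafeMove_safeStrategy hsafe ⟨e, he⟩).2
    | false =>
      rw [hturn] at he hsafe
      exact hsafe e he

end Plays

section Relabelling

/-- The permutation of the edges of `K_6` induced by a permutation of its vertices. -/
def relabel (π : Equiv.Perm (Fin 6)) : Equiv.Perm Edge6 where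
  toFun e := ⟨e.1.map π, (Sym2.isDiag_map π.injective).not.2 e.2⟩
  invFun e := ⟨e.1.map π.symm, (Sym2.isDiag_map π.symm.injective).not.2 e.2⟩
  left_inv e := by simp [Sym2.map_map]
  right_inv e := by simp [Sym2.map_map]

variable (π : Equiv.Perm (Fin 6)) {p : Pos} {c : Bool} {e : Edge6}

lemma relabel_mkEdge6 {a b : Fin 6} (h : a ≠ b) :
    relabel π (mkEdge6 a b h) = mkEdge6 (π a) (π b) (π.injective.ne h) := rfl

lemma colorEdge_comp_relabel :
    colorEdge p c (relabel π e) ∘ relabel π = colorEdge (p ∘ relabel π) c e :=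
  Function.update_comp_eq_of_injective _ (relabel π).injective _ _

lemma hasMonoTri_comp_relabel : HasMonoTri (p ∘ relabel π) c ↔ HasMonoTri p c :=
  π.exists_congr fun _ => π.exists_congr fun _ => π.exists_congr fun _ =>
    exists_prop_congr (fun _ => exists_prop_congr (fun _ => exists_prop_congr (fun _ => Iff.rfl)
      π.injective.ne_iff.symm) π.injective.ne_iff.symm) π.injective.ne_iff.symm

lemma legal_comp_relabel : Legal (p ∘ relabel π) c e ↔ Legal p c (relabel π e) := by
  rw [Legal, Legal, ← colorEdge_comp_relabel, hasMonoTri_comp_relabel, Function.comp_apply]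

lemma redSurvives_comp_relabel (n : ℕ) : RedSurvives n (p ∘ relabel π) ↔ RedSurvives n p := by
  induction n generalizing p with
  | zero => rfl
  | succ n ih =>
    refine (relabel π).exists_congr fun e => and_congr (legal_comp_relabel π)
      ((relabel π).forall_congr fun f => ?_)
    rw [← colorEdge_comp_relabel, legal_comp_relabel, ← colorEdge_comp_relabel, ih]

end Relabelling

section ColorGraph

open SimpleGraph

lemma cliqueFree_three_sup_edge_iff {V : Type*} {G : SimpleGraph V} {a b : V}
    (hG : G.CliqueFree 3) (hab : a ≠ b) :
    (G ⊔ edge a b).CliqueFree 3 ↔ G.commonNeighbors a b = ∅ := by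
  classical
  have hfree : ∀ u v w, G.Adj u v → G.Adj u w → ¬ G.Adj v w := fun u v w huv huw hvw =>
    hG {u, v, w} (is3Clique_triple_iff.2 ⟨huv, huw, hvw⟩)
  constructor
  · refine fun h => Set.eq_empty_iff_forall_notMem.2 fun d ⟨had, hbd⟩ => h {a, b, d} ?_
    exact is3Clique_triple_iff.2 ⟨.inr ((edge_adj ..).2 ⟨.inl ⟨rfl, rfl⟩, hab⟩), .inl had, .inl hbd⟩
  · intro h s hs
    obtain ⟨u, v, w, huv, huw, hvw, -⟩ := is3Clique_iff.1 hs
    have hcommon : ∀ d, G.Adj a d → ¬ G.Adj b d := fun d had hbd =>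
      Set.notMem_empty d (h ▸ ⟨had, hbd⟩)
    simp only [sup_adj, edge_adj] at huv huw hvw
    grind [G.adj_comm]

/-- The graph on the vertices of `K_6` formed by the edges of color `c`. -/
def colorGraph (p : Pos) (c : Bool) : SimpleGraph (Fin 6) where
  Adj a b := ∃ h : a ≠ b, p (mkEdge6 a b h) = some c
  symm := ⟨fun a b ⟨h, hc⟩ => ⟨h.symm, by simpa only [mkEdge6, Sym2.eq_swap] using hc⟩⟩
  loopless := ⟨fun _ ⟨h, _⟩ => h rfl⟩

variable {p : Pos} {c c' : Bool} {a b : Fin 6}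

lemma colorGraph_startPos : colorGraph startPos c = ⊥ := by
  ext
  simp [colorGraph, startPos]

lemma colorGraph_colorEdge_self (h : a ≠ b) :
    colorGraph (colorEdge p c (mkEdge6 a b h)) c = colorGraph p c ⊔ edge a b := by
  ext u v
  have heq : ∀ huv : u ≠ v, mkEdge6 u v huv = mkEdge6 a b h ↔ u = a ∧ v = b ∨ u = b ∧ v = a :=
    fun _ => Subtype.ext_iff.trans Sym2.eq_iff
  simp only [colorGraph, colorEdge, sup_adj, edge_adj, Function.update_apply, heq]
  grind

lemma colorGraph_colorEdge_of_ne {e : Edge6} (hc : c' ≠ c) (he : p e = none) :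
    colorGraph (colorEdge p c e) c' = colorGraph p c' := by
  ext u v
  refine exists_congr fun huv => ?_
  rw [colorEdge, Function.update_apply]
  split_ifs with heq
  · simp [heq, he, hc.symm]
  · rfl

lemma hasMonoTri_iff : HasMonoTri p c ↔ ¬ (colorGraph p c).CliqueFree 3 := by
  classical
  simp only [CliqueFree, not_forall, not_not, is3Clique_iff]
  constructor
  · rintro ⟨a, b, d, hab, had, hbd, h⟩
    exact ⟨_, a, b, d, ⟨hab, h.1⟩, ⟨had, h.2.1⟩, ⟨hbd, h.2.2⟩, rfl⟩
  · rintro ⟨_, a, b, d, ⟨hab, h1⟩, ⟨had, h2⟩, ⟨hbd, h3⟩, -⟩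
    exact ⟨a, b, d, hab, had, hbd, h1, h2, h3⟩

lemma mkEdge6_uncolored_iff (h : a ≠ b) (c : Bool) : p (mkEdge6 a b h) = none ↔
    ¬ (colorGraph p c).Adj a b ∧ ¬ (colorGraph p !c).Adj a b := by
  simp only [colorGraph, h, ne_eq, not_false_eq_true, exists_true_left]
  rcases p (mkEdge6 a b h) with _ | d
  · simp
  · cases c <;> cases d <;> simp

lemma legal_mkEdge6_iff (h : a ≠ b) (hp : (colorGraph p c).CliqueFree 3) :
    Legal p c (mkEdge6 a b h) ↔
      p (mkEdge6 a b h) = none ∧ (colorGraph p c).commonNeighbors a b = ∅ := by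
  rw [Legal, hasMonoTri_iff, not_not, colorGraph_colorEdge_self,
    cliqueFree_three_sup_edge_iff hp h]

end ColorGraph

section Bitmasks

open SimpleGraph

/-- `m` is the bitmask of the `6 × 6` adjacency matrix of `G`, with rows stored consecutively. -/
def IsAdjMask (m : ℕ) (G : SimpleGraph (Fin 6)) : Prop :=
  ∀ a b : Fin 6, m.testBit (6 * a + b) = true ↔ G.Adj a b

/-- Adds the edge `ab` to a graph given by its adjacency bitmask. -/
def addEdge (m : ℕ) (a b : Fin 6) : ℕ := m ||| 2 ^ (6 * a.val + b) ||| 2 ^ (6 * b.val + a)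

/-- Whether the player whose edges have adjacency bitmask `own`, his opponent's being `other`, may
color the edge `ab`: it is uncolored, and rows `a` and `b` of `own` are disjoint. -/
def canPlay (own other : ℕ) (a b : Fin 6) : Bool :=
  !(own ||| other).testBit (6 * a + b) &&
    ((own >>> (6 * a.val)) &&& (own >>> (6 * b.val))) % 2 ^ 6 == 0

lemma isAdjMask_zero : IsAdjMask 0 ⊥ := by
  simp [IsAdjMask]

variable {m : ℕ} {G : SimpleGraph (Fin 6)} {a b : Fin 6}

lemma IsAdjMask.sup_edge (hm : IsAdjMask m G) (hab : a ≠ b) :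
    IsAdjMask (addEdge m a b) (G ⊔ edge a b) := by
  intro u v
  simp only [addEdge, Nat.testBit_or, Bool.or_eq_true, hm u v, Nat.testBit_two_pow,
    decide_eq_true_eq, sup_adj, edge_adj]
  grind

lemma IsAdjMask.rows_disjoint_iff (hm : IsAdjMask m G) :
    ((m >>> (6 * a.val)) &&& (m >>> (6 * b.val))) % 2 ^ 6 = 0 ↔ G.commonNeighbors a b = ∅ := by
  simp only [Set.eq_empty_iff_forall_notMem, mem_commonNeighbors, ← hm a, ← hm b]
  have hbit : ∀ i, (((m >>> (6 * a.val)) &&& (m >>> (6 * b.val))) % 2 ^ 6).testBit i = true ↔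
      i < 6 ∧ m.testBit (6 * a + i) = true ∧ m.testBit (6 * b + i) = true := by
    simp only [Nat.testBit_mod_two_pow, Nat.testBit_and, Nat.testBit_shiftRight,
      Bool.and_eq_true, decide_eq_true_eq, implies_true]
  constructor
  · intro hzero d hd
    have hrow := (hbit d).2 ⟨d.isLt, hd⟩
    simp only [hzero, Nat.zero_testBit, Bool.false_eq_true] at hrow
  · refine fun hdisj => Nat.eq_of_testBit_eq fun i => ?_
    rw [Nat.zero_testBit, ← Bool.not_eq_true, hbit]
    exact fun ⟨hi, hd⟩ => hdisj ⟨i, hi⟩ hd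

/-- `own` and `other` are the adjacency bitmasks of the edges of the player `c` and of his opponent
in the position `p`, in which neither has completed a triangle. -/
structure Encodes (own other : ℕ) (p : Pos) (c : Bool) : Prop where
  own_mask : IsAdjMask own (colorGraph p c)
  other_mask : IsAdjMask other (colorGraph p !c)
  own_cliqueFree : (colorGraph p c).CliqueFree 3
  other_cliqueFree : (colorGraph p !c).CliqueFree 3

namespace Encodes

variable {own other : ℕ} {p : Pos} {c : Bool}

lemma swap (h : Encodes own other p c) : Encodes other own p !c where
  own_mask := h.other_mask
  other_mask := by simpa only [Bool.not_not] using h.own_mask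
  own_cliqueFree := h.other_cliqueFree
  other_cliqueFree := by simpa only [Bool.not_not] using h.own_cliqueFree

lemma zero_startPos : Encodes 0 0 startPos c where
  own_mask := colorGraph_startPos ▸ isAdjMask_zero
  other_mask := colorGraph_startPos ▸ isAdjMask_zero
  own_cliqueFree := colorGraph_startPos ▸ cliqueFree_bot (by norm_num)
  other_cliqueFree := colorGraph_startPos ▸ cliqueFree_bot (by norm_num)

lemma canPlay_iff (h : Encodes own other p c) (hab : a ≠ b) :
    canPlay own other a b = true ↔ Legal p c (mkEdge6 a b hab) := by
  rw [legal_mkEdge6_iff hab h.own_cliqueFree, mkEdge6_uncolored_iff hab c,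
    ← h.own_mask.rows_disjoint_iff, ← h.own_mask, ← h.other_mask]
  simp [canPlay]

lemma play (h : Encodes own other p c) {hab : a ≠ b} (hlegal : Legal p c (mkEdge6 a b hab)) :
    Encodes other (addEdge own a b) (colorEdge p c (mkEdge6 a b hab)) !c := by
  have hother : colorGraph (colorEdge p c (mkEdge6 a b hab)) (!c) = colorGraph p !c :=
    colorGraph_colorEdge_of_ne (Bool.not_ne_self c) hlegal.1
  refine swap
    { own_mask := ?_, other_mask := ?_, own_cliqueFree := ?_, other_cliqueFree := ?_ }
  · rw [colorGraph_colorEdge_self]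
    exact h.own_mask.sup_edge hab
  · exact hother ▸ h.other_mask
  · exact not_not.1 fun htri => hlegal.2 (hasMonoTri_iff.2 htri)
  · exact hother ▸ h.other_cliqueFree

end Encodes

end Bitmasks

section Search

/-- The vertex pairs of `K_6` in colexicographic order. Red tries his moves in this order and Green
in the opposite one: with both in the same order the search below is noticeably longer. -/
def vertexPairs : List (Fin 6 × Fin 6) :=
  [(0, 1), (0, 2), (1, 2), (0, 3), (1, 3), (2, 3), (0, 4), (1, 4), (2, 4), (3, 4),
    (0, 5), (1, 5), (2, 5), (3, 5), (4, 5)]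

/-- `f v`, arranged so that the kernel evaluates `v` to a numeral before it is substituted. -/
def withValue (v : ℕ) (f : ℕ → Bool) : Bool :=
  match v with
  | 0 => f 0
  | n + 1 => f (n + 1)

/-- Depth-first search for a way in which Red, to move with the bitmasks `r` of the red and `g` of
the green edges, finds a legal move at each of his next `n + 1` turns. -/
def search : ℕ → ℕ → ℕ → Bool
  | 0, r, g => vertexPairs.any fun (a, b) => canPlay r g a b
  | n + 1, r, g => vertexPairs.any fun (a, b) => canPlay r g a b &&
      withValue (addEdge r a b) fun r' => vertexPairs.reverse.all fun (u, v) =>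
        !canPlay g r' u v || withValue (addEdge g u v) fun g' => search n r' g'

lemma withValue_eq (v : ℕ) (f : ℕ → Bool) : withValue v f = f v := by
  cases v <;> rfl

lemma ne_of_mem_vertexPairs {a b : Fin 6} (h : (a, b) ∈ vertexPairs) : a ≠ b := by
  revert a b
  decide

lemma exists_mem_vertexPairs (e : Edge6) :
    ∃ a b, ∃ h : a ≠ b, (a, b) ∈ vertexPairs ∧ e = mkEdge6 a b h := by
  have hmem : ∀ a b : Fin 6, a ≠ b → (a, b) ∈ vertexPairs ∨ (b, a) ∈ vertexPairs := by decide
  obtain ⟨⟨a, b⟩, hab⟩ := e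
  replace hab : a ≠ b := by simpa using hab
  obtain h | h := hmem a b hab
  · exact ⟨a, b, hab, h, rfl⟩
  · exact ⟨b, a, hab.symm, h, Subtype.ext Sym2.eq_swap⟩

lemma redSurvives_of_search {n r g : ℕ} {p : Pos} (hp : Encodes r g p true)
    (hsearch : search n r g = true) : RedSurvives (n + 1) p := by
  induction n generalizing r g p with
  | zero =>
    obtain ⟨⟨a, b⟩, hab, hplay⟩ := List.any_eq_true.1 hsearch
    exact ⟨_, (hp.canPlay_iff (ne_of_mem_vertexPairs hab)).1 hplay, fun _ _ => trivial⟩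
  | succ n ih =>
    simp only [search, withValue_eq, List.any_eq_true, List.all_eq_true, List.mem_reverse,
      Bool.and_eq_true, Bool.or_eq_true, Bool.not_eq_true'] at hsearch
    obtain ⟨⟨a, b⟩, hab, hplay, hreply⟩ := hsearch
    have hred := (hp.canPlay_iff (ne_of_mem_vertexPairs hab)).1 hplay
    refine ⟨_, hred, fun f hf => ?_⟩
    obtain ⟨u, v, huv, hmem, rfl⟩ := exists_mem_vertexPairs f
    have hgreen := ((hp.play hred).canPlay_iff huv).2 hf
    exact ih ((hp.play hred).play hf) ((hreply _ hmem).resolve_left (by simp [hgreen]))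

end Search

section Opening

/-- The edge `01`, with which Red opens the game. -/
abbrev openingEdge : Edge6 := mkEdge6 0 1 (by decide)

/-- The position after Red's opening move `01` and the answer `f` of Green. -/
def openingPos (f : Edge6) : Pos :=
  colorEdge (colorEdge startPos true openingEdge) false f

lemma legal_opening : Legal startPos true openingEdge :=
  (Encodes.zero_startPos.canPlay_iff _).1 (by decide)

lemma redSurvives_openingPos {a b : Fin 6} (hab : a ≠ b)
    (hplay : canPlay 0 (addEdge 0 0 1) a b = true)
    (hsearch : search 5 (addEdge 0 0 1) (addEdge 0 a b) = true) :
    RedSurvives 6 (openingPos (mkEdge6 a b hab)) :=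
  have hgreen := Encodes.zero_startPos.play legal_opening
  redSurvives_of_search (hgreen.play ((hgreen.canPlay_iff hab).1 hplay)) hsearch

lemma openingPos_comp_relabel {π : Equiv.Perm (Fin 6)}
    (hπ : relabel π openingEdge = openingEdge) (f : Edge6) :
    openingPos (relabel π f) ∘ relabel π = openingPos f := by
  nth_rw 1 [openingPos, ← hπ]
  rw [colorEdge_comp_relabel, colorEdge_comp_relabel]
  rfl

lemma redSurvives_openingPos_adjacent : RedSurvives 6 (openingPos (mkEdge6 0 2 (by decide))) :=
  redSurvives_openingPos _ (by decide) (by decide +kernel)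

lemma redSurvives_openingPos_disjoint : RedSurvives 6 (openingPos (mkEdge6 4 5 (by decide))) :=
  redSurvives_openingPos _ (by decide) (by decide +kernel)

lemma exists_relabel_eq (f : Edge6) (hf : f ≠ openingEdge) :
    ∃ π, relabel π openingEdge = openingEdge ∧
      (relabel π (mkEdge6 0 2 (by decide)) = f ∨ relabel π (mkEdge6 4 5 (by decide)) = f) := by
  obtain ⟨x, y, hxy, hmem, rfl⟩ := exists_mem_vertexPairs f
  -- The listed pairs have `x < y`, so that `xy` meets `01` just if `x ≤ 1`.
  by_cases hx : x ≤ 1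
  · refine ⟨Equiv.swap 0 x * Equiv.swap 2 y, ?_⟩
    revert x y
    decide
  · refine ⟨Equiv.swap 4 x * Equiv.swap 5 (Equiv.swap 4 x y), ?_⟩
    revert x y
    decide

lemma redSafe_startPos : RedSafe startPos := by
  rw [RedSafe, card_uncolored_startPos]
  refine ⟨_, legal_opening, fun f hf => ?_⟩
  have hne : f ≠ openingEdge := by
    rintro rfl
    simpa [colorEdge] using hf.1
  obtain ⟨π, hπ, rfl | rfl⟩ := exists_relabel_eq f hne
  all_goals rw [← openingPos, ← redSurvives_comp_relabel π, openingPos_comp_relabel hπ]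
  · exact redSurvives_openingPos_adjacent
  · exact redSurvives_openingPos_disjoint

end Opening

/-- In Sim, the second player cannot force a win before the fifteenth move: Red has a
strategy `σ` such that in every play in which he follows it, (a) whenever it is Red's
turn and Red has any legal move, the move prescribed by `σ` is legal, and (b) whenever
it is Red's turn and Red has no legal move at all, exactly fourteen moves have already
been made, i.e. fourteen edges are colored — so Red loses only by being unable to make
the fifteenth and final move (and otherwise Green is at some point unable to move and
Red wins). -/
theorem red_not_stuck_before_move_fifteen :
    ∃ σ : Pos → Edge6, ∀ ms : List Edge6, FollowsRed σ ms →
      playerAt ms.length = true →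
        ((∃ e, Legal (posAfter ms) true e) →
            Legal (posAfter ms) true (σ (posAfter ms))) ∧
        ((∀ e, ¬ Legal (posAfter ms) true e) → ms.length = 14) := by
  refine ⟨safeStrategy, fun ms hms hturn => ?_⟩
  have hsafe : RedSafe (posAfter ms) := by
    simpa only [hturn, if_true] using hms.safe_posAfter redSafe_startPos
  refine ⟨fun hlegal => (hsafe.isSafeMove_safeStrategy hlegal).1, fun hstuck => ?_⟩
  have hleft : (uncolored (posAfter ms)).card ≤ 1 := hsafe.card_uncolored_le_one hstuck
  have htotal : (uncolored (posAfter ms)).card + ms.length = 15 := hms.card_uncolored_add_length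
  have heven : ms.length % 2 = 0 := of_decide_eq_true hturn
  omega
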